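/- Let G be a k-linear Gray category with duals such that for any two parallel 2-morphisms X and Y the space of 3-morphisms G(X,Y) is 1-dimensional and the vertical composition of 3-morphisms is never the zero map. Then every nonzero 3-morphism of G is an isomorphism, every 2-morphism of G is an equivalence (in particular the duality 3-morphisms ev_X, coev_X are isomorphisms), and every 1-morphism of G is a biequivalence (weakly invertible). -/

import Mathlib

open CategoryTheory

/-! ## Cyclic words -/

/-- Cyclic words over `α`: finite lists up to cyclic rotation. -/
abbrev CyclicWord (α : Type) : Type := Quotient (List.IsRotated.setoid α)

/-- The class of a list in the set of cyclic words. -/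
def CyclicWord.mk {α : Type} (l : List α) : CyclicWord α :=
  Quotient.mk (List.IsRotated.setoid α) l

/-- The cyclic source-target matching condition for a list of signed labels:
`s (α_{i+1}, ε_{i+1}) = t (α_i, ε_i)` for all `i` modulo the length. -/
def CyclicMatchList {α β : Type} (s t : α → β) : List α → Prop
  | [] => True
  | a :: l => List.Chain (fun x y => s y = t x) a l ∧
      s a = t ((a :: l).getLast (List.cons_ne_nil a l))

/-! ## Defect data (Definition 2.6) -/

/-- Defect data `𝔻 = (D₃, D₂, D₁, s, t, f)`: three sets of labels, source and target
maps `s, t : D₂ → D₃`, and a folding map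
`f : D₁ → D₃ ⊔ ⊔_{m ≥ 1} ((D₂ × {±}) × ⋯ × (D₂ × {±}))/C_m` such that every cyclic list
in the image of `f` outside `D₃` satisfies the cyclic source-target matching condition. -/
structure DefectData : Type 1 where
  D₃ : Type
  D₂ : Type
  D₁ : Type
  src : D₂ → D₃
  tgt : D₂ → D₃
  fold : D₁ → D₃ ⊕ CyclicWord (D₂ × Bool)
  fold_ne_nil : ∀ x : D₁, fold x ≠ Sum.inr (CyclicWord.mk [])
  fold_match : ∀ (x : D₁) (l : List (D₂ × Bool)), fold x = Sum.inr (CyclicWord.mk l) →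
    CyclicMatchList (fun p => if p.2 then src p.1 else tgt p.1)
      (fun p => if p.2 then tgt p.1 else src p.1) l

namespace DefectData

variable (𝔻 : DefectData)

/-- The source map extended to signed labels: `s(x,+) = s(x)`, `s(x,−) = t(x)`. -/
def sgnSrc : 𝔻.D₂ × Bool → 𝔻.D₃ := fun p => if p.2 then 𝔻.src p.1 else 𝔻.tgt p.1

/-- The target map extended to signed labels: `t(x,+) = t(x)`, `t(x,−) = s(x)`. -/
def sgnTgt : 𝔻.D₂ × Bool → 𝔻.D₃ := fun p => if p.2 then 𝔻.tgt p.1 else 𝔻.src p.1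

/-- `okFrom u l v`: the list `l` of signed `D₂`-labels is a valid sequence of parallel
2-strata read from the 3-stratum labelled `u` to the 3-stratum labelled `v`. -/
def okFrom : 𝔻.D₃ → List (𝔻.D₂ × Bool) → 𝔻.D₃ → Prop
  | u, [], v => u = v
  | u, a :: l, v => 𝔻.sgnSrc a = u ∧ okFrom (𝔻.sgnTgt a) l v

end DefectData

/-- The combinatorial 1-morphisms from `u` to `v` associated to defect data `𝔻`:
lists of signed `D₂`-labels compatible with the source and target maps
(the 1-morphisms of the free pre-2-category on the computad of `𝔻`). -/
def OneCell (𝔻 : DefectData) (u v : 𝔻.D₃) : Type :=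
  {l : List (𝔻.D₂ × Bool) // 𝔻.okFrom u l v}

/-- Reversal of a list of signed labels, with all orientations flipped. -/
def hashList {D₂ : Type} (l : List (D₂ × Bool)) : List (D₂ × Bool) :=
  (l.map fun p => (p.1, !p.2)).reverse

/-- The signed product `g₁^{ε₁} ⋯ g_m^{ε_m}` of a list of signed group elements. -/
def signedProd {G : Type} [Group G] (l : List (G × Bool)) : G :=
  (l.map fun p => if p.2 then p.1 else p.1⁻¹).prod
/-! ## Gray categories (Definition 3.4), k-linear version -/

/-- A `k`-linear Gray category: a set of objects; for all objects `u, v` a `k`-linear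
2-category `G(u,v)` of 1-, 2- and 3-morphisms with strictly associative and unital
compositions `∘` (vertical, `vcomp`) and `⊗` (horizontal, `hcomp`); identity 1-morphisms;
a strictly associative and unital Gray product `□` acting by strict 2-functors
`α □ (−)` and `(−) □ α` (`whiskerL`/`whiskerR` and their actions on 3-morphisms); and an
invertible tensorator `σ_{X,Y}` natural in `X` and `Y`, trivial on identities.
The fields `cast₂`/`cast₃` are the canonical identity-like cells induced by equalities
of parallel cells. -/
structure LinearGrayCategory (k : Type) [Field k] : Type 2 where
  Obj : Type
  Hom₁ : Obj → Obj → Type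
  Hom₂ : ∀ {a b : Obj}, Hom₁ a b → Hom₁ a b → Type
  Hom₃ : ∀ {a b : Obj} {f g : Hom₁ a b}, Hom₂ f g → Hom₂ f g → ModuleCat.{0} k
  id₁ : ∀ a : Obj, Hom₁ a a
  id₂ : ∀ {a b : Obj} (f : Hom₁ a b), Hom₂ f f
  id₃ : ∀ {a b : Obj} {f g : Hom₁ a b} (X : Hom₂ f g), Hom₃ X X
  vcomp : ∀ {a b : Obj} {f g : Hom₁ a b} {X Y Z : Hom₂ f g},
      Hom₃ X Y → Hom₃ Y Z → Hom₃ X Z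
  hcomp : ∀ {a b : Obj} {f g h : Hom₁ a b}, Hom₂ f g → Hom₂ g h → Hom₂ f h
  hcomp₃ : ∀ {a b : Obj} {f g h : Hom₁ a b} {X X' : Hom₂ f g} {Y Y' : Hom₂ g h},
      Hom₃ X X' → Hom₃ Y Y' → Hom₃ (hcomp X Y) (hcomp X' Y')
  gray : ∀ {a b c : Obj}, Hom₁ a b → Hom₁ b c → Hom₁ a c
  whiskerL : ∀ {a b c : Obj} (f : Hom₁ a b) {g g' : Hom₁ b c},
      Hom₂ g g' → Hom₂ (gray f g) (gray f g')
  whiskerR : ∀ {a b c : Obj} {f f' : Hom₁ a b},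
      Hom₂ f f' → ∀ g : Hom₁ b c, Hom₂ (gray f g) (gray f' g)
  whiskerL₃ : ∀ {a b c : Obj} (f : Hom₁ a b) {g g' : Hom₁ b c} {X Y : Hom₂ g g'},
      Hom₃ X Y → Hom₃ (whiskerL f X) (whiskerL f Y)
  whiskerR₃ : ∀ {a b c : Obj} {f f' : Hom₁ a b} {X Y : Hom₂ f f'},
      Hom₃ X Y → ∀ g : Hom₁ b c, Hom₃ (whiskerR X g) (whiskerR Y g)
  cast₂ : ∀ {a b : Obj} {f g : Hom₁ a b}, f = g → Hom₂ f g
  cast₂_rfl : ∀ {a b : Obj} (f : Hom₁ a b), cast₂ (rfl : f = f) = id₂ f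
  cast₃ : ∀ {a b : Obj} {f g : Hom₁ a b} {X Y : Hom₂ f g}, X = Y → Hom₃ X Y
  cast₃_rfl : ∀ {a b : Obj} {f g : Hom₁ a b} (X : Hom₂ f g), cast₃ (rfl : X = X) = id₃ X
  -- vertical composition is a category structure
  vcomp_id_left : ∀ {a b : Obj} {f g : Hom₁ a b} {X Y : Hom₂ f g} (φ : Hom₃ X Y),
      vcomp (id₃ X) φ = φ
  vcomp_id_right : ∀ {a b : Obj} {f g : Hom₁ a b} {X Y : Hom₂ f g} (φ : Hom₃ X Y),
      vcomp φ (id₃ Y) = φ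
  vcomp_assoc : ∀ {a b : Obj} {f g : Hom₁ a b} {X Y Z W : Hom₂ f g}
      (φ : Hom₃ X Y) (ψ : Hom₃ Y Z) (χ : Hom₃ Z W),
      vcomp (vcomp φ ψ) χ = vcomp φ (vcomp ψ χ)
  -- k-linearity of the compositions
  vcomp_add_left : ∀ {a b : Obj} {f g : Hom₁ a b} {X Y Z : Hom₂ f g}
      (φ φ' : Hom₃ X Y) (ψ : Hom₃ Y Z), vcomp (φ + φ') ψ = vcomp φ ψ + vcomp φ' ψ
  vcomp_add_right : ∀ {a b : Obj} {f g : Hom₁ a b} {X Y Z : Hom₂ f g}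
      (φ : Hom₃ X Y) (ψ ψ' : Hom₃ Y Z), vcomp φ (ψ + ψ') = vcomp φ ψ + vcomp φ ψ'
  vcomp_smul_left : ∀ {a b : Obj} {f g : Hom₁ a b} {X Y Z : Hom₂ f g}
      (r : k) (φ : Hom₃ X Y) (ψ : Hom₃ Y Z), vcomp (r • φ) ψ = r • vcomp φ ψ
  vcomp_smul_right : ∀ {a b : Obj} {f g : Hom₁ a b} {X Y Z : Hom₂ f g}
      (r : k) (φ : Hom₃ X Y) (ψ : Hom₃ Y Z), vcomp φ (r • ψ) = r • vcomp φ ψ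
  -- horizontal composition: strict 2-category axioms
  hcomp_id_left : ∀ {a b : Obj} {f g : Hom₁ a b} (X : Hom₂ f g), hcomp (id₂ f) X = X
  hcomp_id_right : ∀ {a b : Obj} {f g : Hom₁ a b} (X : Hom₂ f g), hcomp X (id₂ g) = X
  hcomp_assoc : ∀ {a b : Obj} {f g h i : Hom₁ a b}
      (X : Hom₂ f g) (Y : Hom₂ g h) (Z : Hom₂ h i),
      hcomp (hcomp X Y) Z = hcomp X (hcomp Y Z)
  hcomp₃_id : ∀ {a b : Obj} {f g h : Hom₁ a b} (X : Hom₂ f g) (Y : Hom₂ g h),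
      hcomp₃ (id₃ X) (id₃ Y) = id₃ (hcomp X Y)
  hcomp₃_vcomp : ∀ {a b : Obj} {f g h : Hom₁ a b} {X X' X'' : Hom₂ f g}
      {Y Y' Y'' : Hom₂ g h} (φ : Hom₃ X X') (φ' : Hom₃ X' X'')
      (ψ : Hom₃ Y Y') (ψ' : Hom₃ Y' Y''),
      hcomp₃ (vcomp φ φ') (vcomp ψ ψ') = vcomp (hcomp₃ φ ψ) (hcomp₃ φ' ψ')
  hcomp₃_add_left : ∀ {a b : Obj} {f g h : Hom₁ a b} {X X' : Hom₂ f g} {Y Y' : Hom₂ g h}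
      (φ φ' : Hom₃ X X') (ψ : Hom₃ Y Y'),
      hcomp₃ (φ + φ') ψ = hcomp₃ φ ψ + hcomp₃ φ' ψ
  hcomp₃_smul_left : ∀ {a b : Obj} {f g h : Hom₁ a b} {X X' : Hom₂ f g} {Y Y' : Hom₂ g h}
      (r : k) (φ : Hom₃ X X') (ψ : Hom₃ Y Y'),
      hcomp₃ (r • φ) ψ = r • hcomp₃ φ ψ
  -- the Gray product is strictly associative and unital
  gray_assoc : ∀ {a b c d : Obj} (f : Hom₁ a b) (g : Hom₁ b c) (h : Hom₁ c d),
      gray (gray f g) h = gray f (gray g h)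
  gray_id_left : ∀ {a b : Obj} (f : Hom₁ a b), gray (id₁ a) f = f
  gray_id_right : ∀ {a b : Obj} (f : Hom₁ a b), gray f (id₁ b) = f
  -- `α □ (−)` and `(−) □ α` are strict 2-functors
  whiskerL_id₂ : ∀ {a b c : Obj} (f : Hom₁ a b) (g : Hom₁ b c),
      whiskerL f (id₂ g) = id₂ (gray f g)
  whiskerR_id₂ : ∀ {a b c : Obj} (f : Hom₁ a b) (g : Hom₁ b c),
      whiskerR (id₂ f) g = id₂ (gray f g)
  whiskerL_hcomp : ∀ {a b c : Obj} (f : Hom₁ a b) {g g' g'' : Hom₁ b c}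
      (X : Hom₂ g g') (Y : Hom₂ g' g''),
      whiskerL f (hcomp X Y) = hcomp (whiskerL f X) (whiskerL f Y)
  whiskerR_hcomp : ∀ {a b c : Obj} {f f' f'' : Hom₁ a b}
      (X : Hom₂ f f') (Y : Hom₂ f' f'') (g : Hom₁ b c),
      whiskerR (hcomp X Y) g = hcomp (whiskerR X g) (whiskerR Y g)
  whiskerL₃_id₃ : ∀ {a b c : Obj} (f : Hom₁ a b) {g g' : Hom₁ b c} (X : Hom₂ g g'),
      whiskerL₃ f (id₃ X) = id₃ (whiskerL f X)
  whiskerL₃_vcomp : ∀ {a b c : Obj} (f : Hom₁ a b) {g g' : Hom₁ b c} {X Y Z : Hom₂ g g'}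
      (φ : Hom₃ X Y) (ψ : Hom₃ Y Z),
      whiskerL₃ f (vcomp φ ψ) = vcomp (whiskerL₃ f φ) (whiskerL₃ f ψ)
  whiskerR₃_id₃ : ∀ {a b c : Obj} {f f' : Hom₁ a b} (X : Hom₂ f f') (g : Hom₁ b c),
      whiskerR₃ (id₃ X) g = id₃ (whiskerR X g)
  whiskerR₃_vcomp : ∀ {a b c : Obj} {f f' : Hom₁ a b} {X Y Z : Hom₂ f f'}
      (φ : Hom₃ X Y) (ψ : Hom₃ Y Z) (g : Hom₁ b c),
      whiskerR₃ (vcomp φ ψ) g = vcomp (whiskerR₃ φ g) (whiskerR₃ ψ g)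
  whiskerL₃_add : ∀ {a b c : Obj} (f : Hom₁ a b) {g g' : Hom₁ b c} {X Y : Hom₂ g g'}
      (φ ψ : Hom₃ X Y), whiskerL₃ f (φ + ψ) = whiskerL₃ f φ + whiskerL₃ f ψ
  whiskerL₃_smul : ∀ {a b c : Obj} (f : Hom₁ a b) {g g' : Hom₁ b c} {X Y : Hom₂ g g'}
      (r : k) (φ : Hom₃ X Y), whiskerL₃ f (r • φ) = r • whiskerL₃ f φ
  whiskerR₃_add : ∀ {a b c : Obj} {f f' : Hom₁ a b} {X Y : Hom₂ f f'}
      (φ ψ : Hom₃ X Y) (g : Hom₁ b c), whiskerR₃ (φ + ψ) g = whiskerR₃ φ g + whiskerR₃ ψ g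
  whiskerR₃_smul : ∀ {a b c : Obj} {f f' : Hom₁ a b} {X Y : Hom₂ f f'}
      (r : k) (φ : Hom₃ X Y) (g : Hom₁ b c), whiskerR₃ (r • φ) g = r • whiskerR₃ φ g
  -- whiskering with identity 1-morphisms is trivial
  whiskerL_id₁ : ∀ {a b : Obj} {g g' : Hom₁ a b} (X : Hom₂ g g'),
      HEq (whiskerL (id₁ a) X) X
  whiskerR_id₁ : ∀ {a b : Obj} {f f' : Hom₁ a b} (X : Hom₂ f f'),
      HEq (whiskerR X (id₁ b)) X
  -- the tensorator σ_{X,Y} : (X □ 1) ⊗ (1 □ Y) → (1 □ Y) ⊗ (X □ 1), invertible and natural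
  tensor : ∀ {a b c : Obj} {f f' : Hom₁ a b} {g g' : Hom₁ b c}
      (Y : Hom₂ f f') (X : Hom₂ g g'),
      Hom₃ (hcomp (whiskerR Y g) (whiskerL f' X)) (hcomp (whiskerL f X) (whiskerR Y g'))
  tensorInv : ∀ {a b c : Obj} {f f' : Hom₁ a b} {g g' : Hom₁ b c}
      (Y : Hom₂ f f') (X : Hom₂ g g'),
      Hom₃ (hcomp (whiskerL f X) (whiskerR Y g')) (hcomp (whiskerR Y g) (whiskerL f' X))
  tensor_invL : ∀ {a b c : Obj} {f f' : Hom₁ a b} {g g' : Hom₁ b c}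
      (Y : Hom₂ f f') (X : Hom₂ g g'),
      vcomp (tensor Y X) (tensorInv Y X) = id₃ (hcomp (whiskerR Y g) (whiskerL f' X))
  tensor_invR : ∀ {a b c : Obj} {f f' : Hom₁ a b} {g g' : Hom₁ b c}
      (Y : Hom₂ f f') (X : Hom₂ g g'),
      vcomp (tensorInv Y X) (tensor Y X) = id₃ (hcomp (whiskerL f X) (whiskerR Y g'))
  tensor_natural : ∀ {a b c : Obj} {f f' : Hom₁ a b} {g g' : Hom₁ b c}
      {Y Y' : Hom₂ f f'} {X X' : Hom₂ g g'} (φ : Hom₃ Y Y') (ψ : Hom₃ X X'),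
      vcomp (hcomp₃ (whiskerR₃ φ g) (whiskerL₃ f' ψ)) (tensor Y' X') =
        vcomp (tensor Y X) (hcomp₃ (whiskerL₃ f ψ) (whiskerR₃ φ g'))
  -- the tensorator is trivial on identity 2-morphisms (Definition 3.4 (vi))
  tensor_id_left : ∀ {a b c : Obj} (f : Hom₁ a b) {g g' : Hom₁ b c} (X : Hom₂ g g'),
      HEq (tensor (id₂ f) X) (id₃ (whiskerL f X))
  tensor_id_right : ∀ {a b c : Obj} {f f' : Hom₁ a b} (Y : Hom₂ f f') (g : Hom₁ b c),
      HEq (tensor Y (id₂ g)) (id₃ (whiskerR Y g))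
/-! ## Gray categories with duals (Definition 3.10) -/

/-- A `k`-linear Gray category with duals: each hom-2-category `G(u,v)` is strictly
pivotal, with dual `(−)†` (`dag`) on 2-morphisms, its contravariant action `dag₃` on
3-morphisms, evaluations/coevaluations `ev₂`/`coev₂` satisfying the Zorro moves, and the
Gray-product 2-functors are strictly pivotal; every 1-morphism `α` has a dual `α^#`
(`hash`) together with a fold `coev_α = fold₁` and an invertible triangulator `τ_α`,
where `ev_α = (coev_{α^#})†`. -/
structure GrayCategoryWithDuals (k : Type) [Field k] extends LinearGrayCategory k where
  -- duals for 2-morphisms (strictly pivotal hom-2-categories)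
  dag : ∀ {a b : Obj} {f g : Hom₁ a b}, Hom₂ f g → Hom₂ g f
  dag₃ : ∀ {a b : Obj} {f g : Hom₁ a b} {X Y : Hom₂ f g},
      Hom₃ X Y → Hom₃ (dag Y) (dag X)
  dag_dag : ∀ {a b : Obj} {f g : Hom₁ a b} (X : Hom₂ f g), dag (dag X) = X
  dag_id₂ : ∀ {a b : Obj} (f : Hom₁ a b), dag (id₂ f) = id₂ f
  dag_hcomp : ∀ {a b : Obj} {f g h : Hom₁ a b} (X : Hom₂ f g) (Y : Hom₂ g h),
      dag (hcomp X Y) = hcomp (dag Y) (dag X)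
  dag₃_id₃ : ∀ {a b : Obj} {f g : Hom₁ a b} (X : Hom₂ f g), dag₃ (id₃ X) = id₃ (dag X)
  dag₃_vcomp : ∀ {a b : Obj} {f g : Hom₁ a b} {X Y Z : Hom₂ f g}
      (φ : Hom₃ X Y) (ψ : Hom₃ Y Z), dag₃ (vcomp φ ψ) = vcomp (dag₃ ψ) (dag₃ φ)
  dag₃_dag₃ : ∀ {a b : Obj} {f g : Hom₁ a b} {X Y : Hom₂ f g} (φ : Hom₃ X Y),
      HEq (dag₃ (dag₃ φ)) φ
  dag₃_add : ∀ {a b : Obj} {f g : Hom₁ a b} {X Y : Hom₂ f g} (φ ψ : Hom₃ X Y),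
      dag₃ (φ + ψ) = dag₃ φ + dag₃ ψ
  dag₃_smul : ∀ {a b : Obj} {f g : Hom₁ a b} {X Y : Hom₂ f g} (r : k) (φ : Hom₃ X Y),
      dag₃ (r • φ) = r • dag₃ φ
  -- adjunction 3-morphisms exhibiting `dag X` as the dual of `X`
  ev₂ : ∀ {a b : Obj} {f g : Hom₁ a b} (X : Hom₂ f g), Hom₃ (hcomp X (dag X)) (id₂ f)
  coev₂ : ∀ {a b : Obj} {f g : Hom₁ a b} (X : Hom₂ f g), Hom₃ (id₂ g) (hcomp (dag X) X)
  zorro_left : ∀ {a b : Obj} {f g : Hom₁ a b} (X : Hom₂ f g),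
      vcomp (cast₃ (hcomp_id_right X).symm)
        (vcomp (hcomp₃ (id₃ X) (coev₂ X))
          (vcomp (cast₃ (hcomp_assoc X (dag X) X).symm)
            (vcomp (hcomp₃ (ev₂ X) (id₃ X)) (cast₃ (hcomp_id_left X))))) = id₃ X
  zorro_right : ∀ {a b : Obj} {f g : Hom₁ a b} (X : Hom₂ f g),
      vcomp (cast₃ (hcomp_id_left (dag X)).symm)
        (vcomp (hcomp₃ (coev₂ X) (id₃ (dag X)))
          (vcomp (cast₃ (hcomp_assoc (dag X) X (dag X)))
            (vcomp (hcomp₃ (id₃ (dag X)) (ev₂ X)) (cast₃ (hcomp_id_right (dag X)))))) =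
        id₃ (dag X)
  -- pivotality: `(Φ ⊗ 1) ∘ coev = (1 ⊗ Φ†) ∘ coev`
  coev₂_natural : ∀ {a b : Obj} {f g : Hom₁ a b} {X Y : Hom₂ f g} (φ : Hom₃ X Y),
      vcomp (coev₂ X) (hcomp₃ (id₃ (dag X)) φ) =
        vcomp (coev₂ Y) (hcomp₃ (dag₃ φ) (id₃ Y))
  -- the Gray-product 2-functors are strictly pivotal
  whiskerL_dag : ∀ {a b c : Obj} (f : Hom₁ a b) {g g' : Hom₁ b c} (X : Hom₂ g g'),
      whiskerL f (dag X) = dag (whiskerL f X)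
  whiskerR_dag : ∀ {a b c : Obj} {f f' : Hom₁ a b} (X : Hom₂ f f') (g : Hom₁ b c),
      whiskerR (dag X) g = dag (whiskerR X g)
  whiskerL_ev₂ : ∀ {a b c : Obj} (f : Hom₁ a b) {g g' : Hom₁ b c} (X : Hom₂ g g'),
      HEq (whiskerL₃ f (ev₂ X)) (ev₂ (whiskerL f X))
  whiskerR_ev₂ : ∀ {a b c : Obj} {f f' : Hom₁ a b} (X : Hom₂ f f') (g : Hom₁ b c),
      HEq (whiskerR₃ (ev₂ X) g) (ev₂ (whiskerR X g))
  -- duals for 1-morphisms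
  hash : ∀ {a b : Obj}, Hom₁ a b → Hom₁ b a
  hash_hash : ∀ {a b : Obj} (f : Hom₁ a b), hash (hash f) = f
  hash_id₁ : ∀ a : Obj, hash (id₁ a) = id₁ a
  hash_gray : ∀ {a b c : Obj} (f : Hom₁ a b) (g : Hom₁ b c),
      hash (gray f g) = gray (hash g) (hash f)
  -- the fold `coev_α : 1_v → α □ α^#` and the induced evaluation `ev_α = (coev_{α^#})†`
  fold₁ : ∀ {a b : Obj} (f : Hom₁ a b), Hom₂ (id₁ b) (gray (hash f) f)
  ev₁ : ∀ {a b : Obj} (f : Hom₁ a b), Hom₂ (gray f (hash f)) (id₁ a)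
  ev₁_def : ∀ {a b : Obj} (f : Hom₁ a b), HEq (ev₁ f) (dag (fold₁ (hash f)))
  fold₁_id₁ : ∀ a : Obj, HEq (fold₁ (id₁ a)) (id₂ (id₁ a))
  -- the invertible triangulator (Zorro movie)
  tau : ∀ {a b : Obj} (f : Hom₁ a b),
      Hom₃ (hcomp (cast₂ (gray_id_right f).symm)
          (hcomp (whiskerL f (fold₁ f))
            (hcomp (cast₂ (gray_assoc f (hash f) f).symm)
              (hcomp (whiskerR (ev₁ f) f) (cast₂ (gray_id_left f)))))) (id₂ f)
  tauInv : ∀ {a b : Obj} (f : Hom₁ a b),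
      Hom₃ (id₂ f)
        (hcomp (cast₂ (gray_id_right f).symm)
          (hcomp (whiskerL f (fold₁ f))
            (hcomp (cast₂ (gray_assoc f (hash f) f).symm)
              (hcomp (whiskerR (ev₁ f) f) (cast₂ (gray_id_left f))))))
  tau_invL : ∀ {a b : Obj} (f : Hom₁ a b), vcomp (tau f) (tauInv f) = id₃ _
  tau_invR : ∀ {a b : Obj} (f : Hom₁ a b), vcomp (tauInv f) (tau f) = id₃ (id₂ f)
  tau_id₁ : ∀ a : Obj, HEq (tau (id₁ a)) (id₃ (id₂ (id₁ a)))

namespace LinearGrayCategory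

variable {k : Type} [Field k] (T : LinearGrayCategory k)

/-- A 3-morphism is invertible (with respect to vertical composition). -/
def IsIso₃ {a b : T.Obj} {f g : T.Hom₁ a b} {X Y : T.Hom₂ f g} (φ : T.Hom₃ X Y) : Prop :=
  ∃ ψ : T.Hom₃ Y X, T.vcomp φ ψ = T.id₃ X ∧ T.vcomp ψ φ = T.id₃ Y

/-- Two parallel 2-morphisms are 3-isomorphic. -/
def Iso₂ {a b : T.Obj} {f g : T.Hom₁ a b} (X Y : T.Hom₂ f g) : Prop :=
  ∃ φ : T.Hom₃ X Y, T.IsIso₃ φ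

/-- A 2-morphism is an equivalence in its hom-2-category. -/
def IsEquiv₂ {a b : T.Obj} {f g : T.Hom₁ a b} (X : T.Hom₂ f g) : Prop :=
  ∃ Y : T.Hom₂ g f, T.Iso₂ (T.hcomp X Y) (T.id₂ f) ∧ T.Iso₂ (T.hcomp Y X) (T.id₂ g)

/-- Two parallel 1-morphisms are equivalent (there is an equivalence 2-morphism). -/
def Equiv₁ {a b : T.Obj} (f g : T.Hom₁ a b) : Prop :=
  ∃ X : T.Hom₂ f g, T.IsEquiv₂ X

/-- A 1-morphism `f : a → b` is a biequivalence (weakly invertible). -/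
def IsBiequiv {a b : T.Obj} (f : T.Hom₁ a b) : Prop :=
  ∃ g : T.Hom₁ b a, T.Equiv₁ (T.gray f g) (T.id₁ a) ∧ T.Equiv₁ (T.gray g f) (T.id₁ b)

end LinearGrayCategory

/-!
A nonzero 3-morphism `φ : X ⟶ Y` has a nonzero composite with any nonzero `ψ : Y ⟶ X`. A
finite-dimensional algebra without zero divisors is a division algebra, so this composite is
invertible and `φ` is a split monomorphism; the resulting idempotent on `Y` is nonzero, hence the
identity, and `φ` is an isomorphism. The Zorro moves force `ev_X` and `coev_X` to be nonzero, hence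
isomorphisms. Thus `X†` is an inverse of `X`, every 2-morphism is an equivalence, and `ev_α` and
`coev_α` exhibit `α^#` as a weak inverse of `α`.
-/

section LinearCategory

variable {C : Type*} [Category* C] [Preadditive C]

theorem isIso_of_isSplitMono_of_ne_zero {X Y : C} [NoZeroDivisors (End Y)] (f : X ⟶ Y)
    [IsSplitMono f] (hf : f ≠ 0) : IsIso f := by
  let e : End Y := retraction f ≫ f
  have hfe : f ≫ e = f := IsSplitMono.id_assoc f f
  have he_ne : e ≠ 0 := fun he ↦ hf (by rw [← hfe, he, Limits.comp_zero])
  have he_annihilates : (e - 1) * e = 0 := by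
    rw [End.mul_def, Preadditive.comp_sub, End.one_def, Category.comp_id]
    exact sub_eq_zero.2 (by simp only [e, Category.assoc, IsSplitMono.id_assoc])
  have he : e = 1 := sub_eq_zero.1 ((mul_eq_zero.1 he_annihilates).resolve_right he_ne)
  exact ⟨retraction f, IsSplitMono.id f, he⟩

theorem isIso_of_comp_ne_zero_of_finiteDimensional_end (k : Type*) [Field k] [Linear k C] {X Y : C}
    [FiniteDimensional k (End X)] [NoZeroDivisors (End X)] [NoZeroDivisors (End Y)]
    {f : X ⟶ Y} {g : Y ⟶ X} (hfg : f ≫ g ≠ 0) : IsIso f := by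
  have : Nontrivial (End X) := ⟨f ≫ g, 0, hfg⟩
  have : IsDomain (End X) := NoZeroDivisors.to_isDomain _
  have : IsIso (f ≫ g) :=
    (isUnit_iff_isIso _).1 (FiniteDimensional.isUnit k (K := End X) hfg)
  have : IsSplitMono f := .mk' ⟨g ≫ inv (f ≫ g), by rw [← Category.assoc, IsIso.hom_inv_id]⟩
  exact isIso_of_isSplitMono_of_ne_zero f fun hf ↦ hfg (by rw [hf, Limits.zero_comp])

theorem isIso_of_ne_zero_of_finrank_hom_pos (k : Type*) [Field k] [Linear k C]
    (hdim : ∀ X Y : C, 0 < Module.finrank k (X ⟶ Y))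
    (hcomp : ∀ {X Y Z : C} (f : X ⟶ Y) (g : Y ⟶ Z), f ≠ 0 → g ≠ 0 → f ≫ g ≠ 0)
    {X Y : C} {f : X ⟶ Y} (hf : f ≠ 0) : IsIso f := by
  have noZeroDivisors (Z : C) : NoZeroDivisors (End Z) :=
    ⟨fun {a b} hab ↦ by
      by_contra! h
      exact hcomp b a h.2 h.1 hab⟩
  have := noZeroDivisors X
  have := noZeroDivisors Y
  have : FiniteDimensional k (End X) := Module.finite_of_finrank_pos (hdim X X)
  have : Nontrivial (Y ⟶ X) := Module.nontrivial_of_finrank_pos (hdim Y X)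
  obtain ⟨g, hg⟩ := exists_ne (0 : Y ⟶ X)
  exact isIso_of_comp_ne_zero_of_finiteDimensional_end k (hcomp f g hf hg)

end LinearCategory

namespace LinearGrayCategory

variable {k : Type} [Field k] {T : LinearGrayCategory k} {a b : T.Obj} {f g h : T.Hom₁ a b}

/-- The category of 2-morphisms `f → g` and 3-morphisms between them, under vertical
composition. -/
instance : Category (T.Hom₂ f g) where
  Hom X Y := T.Hom₃ X Y
  id := T.id₃
  comp := T.vcomp
  id_comp := T.vcomp_id_left
  comp_id := T.vcomp_id_right
  assoc := T.vcomp_assoc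

instance : Preadditive (T.Hom₂ f g) where
  homGroup X Y := inferInstanceAs (AddCommGroup (T.Hom₃ X Y))
  add_comp _ _ _ := T.vcomp_add_left
  comp_add _ _ _ := T.vcomp_add_right

instance : Linear k (T.Hom₂ f g) where
  homModule X Y := inferInstanceAs (Module k (T.Hom₃ X Y))
  smul_comp _ _ _ := T.vcomp_smul_left
  comp_smul _ _ _ φ r ψ := T.vcomp_smul_right r φ ψ

theorem isIso₃_iff_isIso {X Y : T.Hom₂ f g} (φ : X ⟶ Y) : T.IsIso₃ φ ↔ IsIso φ :=
  ⟨fun hφ ↦ ⟨hφ⟩, fun hφ ↦ hφ.out⟩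

theorem isIso₃_of_ne_zero (hdim : ∀ X Y : T.Hom₂ f g, 0 < Module.finrank k (T.Hom₃ X Y))
    (hcomp : ∀ {X Y Z : T.Hom₂ f g} (φ : T.Hom₃ X Y) (ψ : T.Hom₃ Y Z),
      φ ≠ 0 → ψ ≠ 0 → T.vcomp φ ψ ≠ 0)
    {X Y : T.Hom₂ f g} {φ : T.Hom₃ X Y} (hφ : φ ≠ 0) : T.IsIso₃ φ :=
  (isIso₃_iff_isIso φ).2 (isIso_of_ne_zero_of_finrank_hom_pos k hdim hcomp hφ)

theorem id₃_ne_zero (X : T.Hom₂ f g) [Nontrivial (T.Hom₃ X X)] : T.id₃ X ≠ 0 :=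
  have : Nontrivial (End X) := ‹Nontrivial (T.Hom₃ X X)›
  (one_ne_zero : (1 : End X) ≠ 0)

theorem zero_vcomp {X Y Z : T.Hom₂ f g} (ψ : T.Hom₃ Y Z) :
    T.vcomp (0 : T.Hom₃ X Y) ψ = 0 :=
  Limits.zero_comp (C := T.Hom₂ f g) (f := ψ)

theorem vcomp_zero {X Y Z : T.Hom₂ f g} (φ : T.Hom₃ X Y) :
    T.vcomp φ (0 : T.Hom₃ Y Z) = 0 :=
  Limits.comp_zero (C := T.Hom₂ f g) (f := φ)

theorem zero_hcomp₃ {X X' : T.Hom₂ f g} {Y Y' : T.Hom₂ g h} (ψ : T.Hom₃ Y Y') :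
    T.hcomp₃ (0 : T.Hom₃ X X') ψ = 0 := by
  simpa only [zero_smul] using T.hcomp₃_smul_left (0 : k) (0 : T.Hom₃ X X') ψ

theorem Iso₂.symm {X Y : T.Hom₂ f g} : T.Iso₂ X Y → T.Iso₂ Y X :=
  fun ⟨φ, ψ, hφψ, hψφ⟩ ↦ ⟨ψ, φ, hψφ, hφψ⟩

theorem Equiv₁.symm : T.Equiv₁ f g → T.Equiv₁ g f :=
  fun ⟨X, Y, hXY, hYX⟩ ↦ ⟨Y, X, hYX, hXY⟩

end LinearGrayCategory

namespace GrayCategoryWithDuals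

variable {k : Type} [Field k] {G : GrayCategoryWithDuals k} {a b : G.Obj} {f g : G.Hom₁ a b}

open LinearGrayCategory

theorem ev₂_ne_zero (X : G.Hom₂ f g) [Nontrivial (G.Hom₃ X X)] : G.ev₂ X ≠ 0 := fun hev ↦
  id₃_ne_zero X (by rw [← G.zorro_left X, hev, zero_hcomp₃, zero_vcomp]; simp only [vcomp_zero])

theorem coev₂_ne_zero (X : G.Hom₂ f g) [Nontrivial (G.Hom₃ (G.dag X) (G.dag X))] :
    G.coev₂ X ≠ 0 := fun hcoev ↦
  id₃_ne_zero (G.dag X) (by rw [← G.zorro_right X, hcoev, zero_hcomp₃, zero_vcomp, vcomp_zero])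

theorem isEquiv₂_of_isIso₃ {X : G.Hom₂ f g} (hev : G.IsIso₃ (G.ev₂ X))
    (hcoev : G.IsIso₃ (G.coev₂ X)) : G.IsEquiv₂ X :=
  ⟨G.dag X, ⟨G.ev₂ X, hev⟩, Iso₂.symm ⟨G.coev₂ X, hcoev⟩⟩

theorem isBiequiv_of_isEquiv₂ (hev : G.IsEquiv₂ (G.ev₁ f))
    (hfold : G.IsEquiv₂ (G.fold₁ f)) : G.IsBiequiv f :=
  ⟨G.hash f, ⟨G.ev₁ f, hev⟩, Equiv₁.symm ⟨G.fold₁ f, hfold⟩⟩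

end GrayCategoryWithDuals

theorem gray_category_with_one_dimensional_hom_spaces_general
    (k : Type) [Field k] (G : GrayCategoryWithDuals k)
    (hdim : ∀ {a b : G.Obj} {f g : G.Hom₁ a b} (X Y : G.Hom₂ f g),
        0 < Module.finrank k (G.Hom₃ X Y))
    (hcomp : ∀ {a b : G.Obj} {f g : G.Hom₁ a b} {X Y Z : G.Hom₂ f g}
        (φ : G.Hom₃ X Y) (ψ : G.Hom₃ Y Z), φ ≠ 0 → ψ ≠ 0 → G.vcomp φ ψ ≠ 0) :
    (∀ {a b : G.Obj} {f g : G.Hom₁ a b} {X Y : G.Hom₂ f g} (φ : G.Hom₃ X Y),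
        φ ≠ 0 → G.IsIso₃ φ) ∧
    (∀ {a b : G.Obj} {f g : G.Hom₁ a b} (X : G.Hom₂ f g), G.IsEquiv₂ X) ∧
    (∀ {a b : G.Obj} {f g : G.Hom₁ a b} (X : G.Hom₂ f g),
        G.IsIso₃ (G.ev₂ X) ∧ G.IsIso₃ (G.coev₂ X)) ∧
    (∀ {a b : G.Obj} (f : G.Hom₁ a b), G.IsBiequiv f) := by
  have nontrivial_hom₃ {a b : G.Obj} {f g : G.Hom₁ a b} (X Y : G.Hom₂ f g) :
      Nontrivial (G.Hom₃ X Y) := Module.nontrivial_of_finrank_pos (hdim X Y)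
  have isIso₃ {a b : G.Obj} {f g : G.Hom₁ a b} {X Y : G.Hom₂ f g} (φ : G.Hom₃ X Y)
      (hφ : φ ≠ 0) : G.IsIso₃ φ := LinearGrayCategory.isIso₃_of_ne_zero hdim hcomp hφ
  have isIso₃_ev₂ {a b : G.Obj} {f g : G.Hom₁ a b} (X : G.Hom₂ f g) : G.IsIso₃ (G.ev₂ X) :=
    isIso₃ _ (GrayCategoryWithDuals.ev₂_ne_zero X)
  have isIso₃_coev₂ {a b : G.Obj} {f g : G.Hom₁ a b} (X : G.Hom₂ f g) :
      G.IsIso₃ (G.coev₂ X) := isIso₃ _ (GrayCategoryWithDuals.coev₂_ne_zero X)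
  have isEquiv₂ {a b : G.Obj} {f g : G.Hom₁ a b} (X : G.Hom₂ f g) : G.IsEquiv₂ X :=
    GrayCategoryWithDuals.isEquiv₂_of_isIso₃ (isIso₃_ev₂ X) (isIso₃_coev₂ X)
  exact ⟨isIso₃, isEquiv₂, fun X ↦ ⟨isIso₃_ev₂ X, isIso₃_coev₂ X⟩,
    fun f ↦ GrayCategoryWithDuals.isBiequiv_of_isEquiv₂ (isEquiv₂ _) (isEquiv₂ _)⟩

/-!
# Statement 6 (Lemma 4.1)

Let `G` be a `k`-linear Gray category with duals such that for any two parallel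
2-morphisms `X`, `Y` the space of 3-morphisms `G(X,Y)` is 1-dimensional and the
vertical composition of 3-morphisms is never the zero map (equivalently, the composite
of two nonzero 3-morphisms is nonzero). Then every nonzero 3-morphism of `G` is an
isomorphism, every 2-morphism of `G` is an equivalence (in particular the duality
3-morphisms `ev_X` and `coev_X` are isomorphisms), and every 1-morphism of `G` is a
biequivalence (weakly invertible).
-/
theorem gray_category_with_one_dimensional_hom_spaces
    (k : Type) [Field k] (G : GrayCategoryWithDuals k)
    (h1 : ∀ {a b : G.Obj} {f g : G.Hom₁ a b} (X Y : G.Hom₂ f g),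
        Module.finrank k (G.Hom₃ X Y) = 1)
    (h2 : ∀ {a b : G.Obj} {f g : G.Hom₁ a b} {X Y Z : G.Hom₂ f g}
        (φ : G.Hom₃ X Y) (ψ : G.Hom₃ Y Z), φ ≠ 0 → ψ ≠ 0 → G.vcomp φ ψ ≠ 0) :
    -- every nonzero 3-morphism is an isomorphism
    (∀ {a b : G.Obj} {f g : G.Hom₁ a b} {X Y : G.Hom₂ f g} (φ : G.Hom₃ X Y),
        φ ≠ 0 → G.toLinearGrayCategory.IsIso₃ φ) ∧
    -- every 2-morphism is an equivalence
    (∀ {a b : G.Obj} {f g : G.Hom₁ a b} (X : G.Hom₂ f g),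
        G.toLinearGrayCategory.IsEquiv₂ X) ∧
    -- in particular the duality 3-morphisms are isomorphisms
    (∀ {a b : G.Obj} {f g : G.Hom₁ a b} (X : G.Hom₂ f g),
        G.toLinearGrayCategory.IsIso₃ (G.ev₂ X) ∧
        G.toLinearGrayCategory.IsIso₃ (G.coev₂ X)) ∧
    -- every 1-morphism is a biequivalence
    (∀ {a b : G.Obj} (f : G.Hom₁ a b), G.toLinearGrayCategory.IsBiequiv f) := by
  exact gray_category_with_one_dimensional_hom_spaces_general k G
    (fun X Y ↦ (h1 X Y).symm ▸ one_pos) h2
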